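/- Let n ≥ 2 and let Q be an n×n Laplacian matrix, with effective resistances ω_ij = (e_i − e_j)ᵀ·Q†·(e_i − e_j). Then the map (i, j) ↦ √(ω_ij) is a metric on the index set, and it is a Euclidean metric: there exist affinely independent points s_1, …, s_n in ℝ^{n−1} with ‖s_i − s_j‖ = √(ω_ij) for all i, j. -/

import Mathlib

open Matrix

/-- A Laplacian matrix: symmetric, nonpositive off-diagonal entries, zero row sums,
and irreducible. -/
def IsLaplacian {m : Type*} [Fintype m] [DecidableEq m] (Q : Matrix m m ℝ) : Prop :=
  Q.IsSymm ∧ (∀ i j, i ≠ j → Q i j ≤ 0) ∧ (Q *ᵥ (fun _ => (1 : ℝ)) = 0) ∧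
  ∀ V : Finset m, V.Nonempty → V ≠ Finset.univ → ∃ i ∈ V, ∃ j ∉ V, Q i j ≠ 0

/-- `B` is the Moore–Penrose pseudoinverse of `A`. -/
def IsMoorePenrose {k l : Type*} [Fintype k] [Fintype l]
    (A : Matrix k l ℝ) (B : Matrix l k ℝ) : Prop :=
  A * B * A = A ∧ B * A * B = B ∧ (A * B)ᵀ = A * B ∧ (B * A)ᵀ = B * A




lemma lap_ker {n : ℕ} (Q : Matrix (Fin n) (Fin n) ℝ) (hQ : IsLaplacian Q)
    (x : Fin n → ℝ) (hx : Q *ᵥ x = 0) (i j : Fin n) : x i = x j := by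
  obtain ⟨hs, hoff, hrow, hirr⟩ := hQ
  obtain ⟨m, -, hm⟩ := Finset.exists_max_image Finset.univ x ⟨i, Finset.mem_univ i⟩
  have key : ∀ a b, x a = x m → Q a b ≠ 0 → x b = x m := by
    intro a b ha hab
    have h1 : ∑ k, Q a k * x k = 0 := congrFun hx a
    have h2 : ∑ k, Q a k * 1 = 0 := congrFun hrow a
    have h3 : ∑ k, Q a k * (x k - x m) = 0 := by
      simp only [mul_sub, Finset.sum_sub_distrib, ← Finset.sum_mul]
      simp only [mul_one] at h2
      rw [h1, h2]; simp
    have h4 : ∀ k ∈ Finset.univ, 0 ≤ Q a k * (x k - x m) := by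
      intro k _
      by_cases hk : a = k
      · subst hk; simp [ha]
      · exact mul_nonneg_of_nonpos_of_nonpos (hoff a k hk)
          (sub_nonpos.2 (hm k (Finset.mem_univ k)))
    have h5 := (Finset.sum_eq_zero_iff_of_nonneg h4).1 h3 b (Finset.mem_univ b)
    rcases mul_eq_zero.1 h5 with h | h
    · exact absurd h hab
    · linarith
  have hV : (Finset.univ.filter fun k => x k = x m) = Finset.univ := by
    by_contra hne
    obtain ⟨a, ha, b, hb, hab⟩ := hirr _ ⟨m, by simp⟩ hne
    simp only [Finset.mem_filter, Finset.mem_univ, true_and] at ha hb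
    exact hb (key a b ha hab)
  have hall : ∀ k, x k = x m := fun k => by
    have : k ∈ (Finset.univ.filter fun k => x k = x m) := by rw [hV]; simp
    simpa using this
  rw [hall i, hall j]

lemma lap_psd {n : ℕ} (Q : Matrix (Fin n) (Fin n) ℝ) (hQ : IsLaplacian Q) :
    Q.PosSemidef := by
  obtain ⟨hs, hoff, hrow, hirr⟩ := hQ
  refine Matrix.PosSemidef.of_dotProduct_mulVec_nonneg (by
    rw [Matrix.IsHermitian, Matrix.conjTranspose_eq_transpose_of_trivial]; exact hs) ?_
  intro x
  have hr : ∀ a, ∑ k, Q a k = 0 := fun a => by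
    have h2 : ∑ k, Q a k * 1 = 0 := congrFun hrow a
    simpa using h2
  have e1 : ∑ i, ∑ j, Q i j * (x i * x i) = 0 := by
    simp [← Finset.sum_mul, hr]
  have e2 : ∑ i, ∑ j, Q i j * (x j * x j) = 0 := by
    rw [Finset.sum_comm, ← e1]
    refine Finset.sum_congr rfl fun i _ => Finset.sum_congr rfl fun j _ => ?_
    rw [hs.apply]
  have e3 : star x ⬝ᵥ (Q *ᵥ x) = ∑ i, ∑ j, Q i j * (x i * x j) := by
    simp only [dotProduct, mulVec, Finset.mul_sum, star_trivial]
    refine Finset.sum_congr rfl fun i _ => Finset.sum_congr rfl fun j _ => ?_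
    ring
  have e4 : ∑ i, ∑ j, Q i j * (x i - x j) ^ 2 ≤ 0 := by
    refine Finset.sum_nonpos fun i _ => Finset.sum_nonpos fun j _ => ?_
    by_cases h : i = j
    · simp [h]
    · exact mul_nonpos_of_nonpos_of_nonneg (hoff i j h) (sq_nonneg _)
  have e5 : ∑ i, ∑ j, Q i j * (x i - x j) ^ 2 = ∑ i, ∑ j, Q i j * (x i * x i)
      + ∑ i, ∑ j, Q i j * (x j * x j) - 2 * ∑ i, ∑ j, Q i j * (x i * x j) := by
    simp only [Finset.mul_sum, ← Finset.sum_add_distrib, ← Finset.sum_sub_distrib]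
    refine Finset.sum_congr rfl fun i _ => Finset.sum_congr rfl fun j _ => ?_
    ring
  rw [e3]; linarith

lemma lap_proj {n : ℕ} (Q : Matrix (Fin n) (Fin n) ℝ) (hQ : IsLaplacian Q)
    (Qd : Matrix (Fin n) (Fin n) ℝ) (hQd : IsMoorePenrose Q Qd)
    (x : Fin n → ℝ) (hx : ∑ i, x i = 0) : Q *ᵥ (Qd *ᵥ x) = x := by
  have hker := lap_ker Q hQ (x - Q *ᵥ (Qd *ᵥ x))
  obtain ⟨hs, hoff, hrow, hirr⟩ := hQ
  obtain ⟨h1, h2, h3, h4⟩ := hQd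
  have hQP : Q * (Q * Qd) = Q := by
    have := congrArg Matrix.transpose h1
    rwa [Matrix.transpose_mul, h3, hs.eq] at this
  have hc := hker (by
    rw [Matrix.mulVec_sub, Matrix.mulVec_mulVec, Matrix.mulVec_mulVec, Matrix.mul_assoc, hQP, sub_self])
  have hsum : ∑ i, (Q *ᵥ (Qd *ᵥ x)) i = 0 := by
    have : (fun _ => (1 : ℝ)) ⬝ᵥ (Q *ᵥ (Qd *ᵥ x)) = 0 := by
      rw [Matrix.dotProduct_mulVec, ← Matrix.mulVec_transpose, hs.eq, hrow, zero_dotProduct]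
    simpa [dotProduct] using this
  funext i
  have hs2 : ∑ j, (x - Q *ᵥ (Qd *ᵥ x)) j = 0 := by
    simp only [Pi.sub_apply, Finset.sum_sub_distrib]; rw [hx, hsum, sub_zero]
  rw [Finset.sum_congr rfl (fun j _ => hc j i)] at hs2
  have hn : (n : ℝ) ≠ 0 := by
    have := i.pos
    positivity
  rw [Finset.sum_const, Finset.card_univ, Fintype.card_fin, nsmul_eq_mul] at hs2
  have h6 := (mul_eq_zero.1 hs2).resolve_left hn
  rw [Pi.sub_apply] at h6
  linarith

/-- The square root of the effective resistance is a metric on the nodes, and it is a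
Euclidean metric realized by the vertices of a simplex in `ℝ^{n−1}`. -/
theorem stmt_17 {n : ℕ} (hn : 2 ≤ n) (Q : Matrix (Fin n) (Fin n) ℝ)
    (hQ : IsLaplacian Q)
    (Qd : Matrix (Fin n) (Fin n) ℝ) (hQd : IsMoorePenrose Q Qd)
    (ω : Fin n → Fin n → ℝ)
    (hω : ∀ i j, ω i j = (Pi.single i (1 : ℝ) - Pi.single j 1) ⬝ᵥ
      (Qd *ᵥ (Pi.single i (1 : ℝ) - Pi.single j 1))) :
    (∀ i j, Real.sqrt (ω i j) = 0 ↔ i = j) ∧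
    (∀ i j, Real.sqrt (ω i j) = Real.sqrt (ω j i)) ∧
    (∀ i j k, Real.sqrt (ω i k) ≤ Real.sqrt (ω i j) + Real.sqrt (ω j k)) ∧
    ∃ s : Fin n → EuclideanSpace ℝ (Fin (n - 1)),
      AffineIndependent ℝ s ∧ ∀ i j, dist (s i) (s j) = Real.sqrt (ω i j) := by
  have main : ∃ s : Fin n → EuclideanSpace ℝ (Fin (n - 1)),
      AffineIndependent ℝ s ∧ ∀ i j, dist (s i) (s j) = Real.sqrt (ω i j) := by
    obtain ⟨B, hB⟩ : ∃ B : Matrix (Fin n) (Fin n) ℝ, Q = Bᵀ * B := by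
      open scoped MatrixOrder Matrix.Norms.L2Operator in
      obtain ⟨B, hB⟩ := CStarAlgebra.nonneg_iff_eq_star_mul_self.mp (lap_psd Q hQ).nonneg
      exact ⟨B, by simpa [Matrix.star_eq_conjTranspose] using hB⟩
    let T : (Fin n → ℝ) →ₗ[ℝ] EuclideanSpace ℝ (Fin n) :=
      (WithLp.linearEquiv 2 ℝ (Fin n → ℝ)).symm.toLinearMap ∘ₗ (B * Qd).mulVecLin
    have hTz : ∀ w : Fin n → ℝ, ∑ i, w i = 0 → T w = 0 → w = 0 := by
      intro w hw h
      have h0 : (B * Qd) *ᵥ w = 0 := by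
        simpa [T] using h
      rw [← lap_proj Q hQ Qd hQd w hw, hB, Matrix.mulVec_mulVec, Matrix.mul_assoc,
        ← Matrix.mulVec_mulVec, h0, Matrix.mulVec_zero]
    have hTn : ∀ w : Fin n → ℝ, ∑ i, w i = 0 → ‖T w‖ ^ 2 = w ⬝ᵥ (Qd *ᵥ w) := by
      intro w hw
      have : ‖T w‖ ^ 2 = ((B * Qd) *ᵥ w) ⬝ᵥ ((B * Qd) *ᵥ w) := by
        rw [EuclideanSpace.norm_sq_eq]
        simp [T, dotProduct, sq]
      rw [this]
      conv_rhs => rw [← lap_proj Q hQ Qd hQd w hw]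
      rw [lap_proj Q hQ Qd hQd w hw]
      conv_rhs => rw [← lap_proj Q hQ Qd hQd w hw, lap_proj Q hQ Qd hQd w hw]
      conv_rhs =>
        lhs
        rw [← lap_proj Q hQ Qd hQd w hw]
      rw [hB, ← Matrix.mulVec_mulVec w B Qd, ← Matrix.mulVec_mulVec _ Bᵀ B,
        Matrix.mulVec_transpose, ← Matrix.dotProduct_mulVec]
    let t : Fin n → EuclideanSpace ℝ (Fin n) := fun i => T (Pi.single i 1)
    have ht : AffineIndependent ℝ t := by
      rw [affineIndependent_iff]
      intro S w hw hwt i hi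
      have e : T (∑ j ∈ S, w j • Pi.single j 1) = 0 := by
        simpa [map_sum, t] using hwt
      have hv : ∀ k, (∑ j ∈ S, w j • (Pi.single j 1 : Fin n → ℝ)) k = if k ∈ S then w k else 0 := by
        intro k
        simp [Finset.sum_apply, Pi.single_apply]
      have := hTz _ (by simp only [hv]; simpa using hw) e
      have h2 := hv i
      rw [this] at h2
      simpa [hi] using h2.symm
    have i0 : Fin n := ⟨0, by omega⟩
    have hfr : Module.finrank ℝ (vectorSpan ℝ (Set.range t)) = n - 1 :=
      ht.finrank_vectorSpan (by simp; omega)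
    let L := ((stdOrthonormalBasis ℝ (vectorSpan ℝ (Set.range t))).reindex
      (finCongr hfr)).repr
    let tsub : Fin n → vectorSpan ℝ (Set.range t) := fun i =>
      ⟨t i - t i0, vsub_mem_vectorSpan ℝ ⟨i, rfl⟩ ⟨i0, rfl⟩⟩
    refine ⟨fun i => L (tsub i), ?_, ?_⟩
    · let F : EuclideanSpace ℝ (Fin (n - 1)) →ᵃ[ℝ] EuclideanSpace ℝ (Fin n) :=
        ((Submodule.subtype _) ∘ₗ L.symm.toLinearEquiv.toLinearMap).toAffineMap
          + AffineMap.const ℝ _ (t i0)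
      refine AffineIndependent.of_comp F ?_
      convert ht using 1
      funext i
      simp [F, tsub]
    · intro i j
      have hsum : ∑ k, (Pi.single i (1 : ℝ) - Pi.single j 1 : Fin n → ℝ) k = 0 := by
        simp
      rw [L.dist_map, Subtype.dist_eq, hω, ← hTn _ hsum, Real.sqrt_sq (norm_nonneg _), map_sub,
        dist_eq_norm]
      simp [tsub, t]
  obtain ⟨s, hs, hd⟩ := main
  refine ⟨fun i j => ?_, fun i j => ?_, fun i j k => ?_, s, hs, hd⟩
  · rw [← hd, dist_eq_zero]
    exact hs.injective.eq_iff
  · rw [← hd, ← hd, dist_comm]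
  · rw [← hd, ← hd, ← hd]
    exact dist_triangle _ _ _
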